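/- Let T=(V,E) be a leafless directed tree with no root, let λ={λ_v}_{v∈V} be a sequence of positive real numbers, and let 1 ≤ q < ∞. Assume the backward shift B : L^q(T,λ) → L^q(T,λ) is bounded. If there exists an increasing sequence of natural numbers {n_k} such that for all u ∈ V one has Θ(u,n_k) → 0 and Ω(u,n_k) → 0 as k → ∞, where Θ(u,n) = γ(parent^n(u),n)^{q−1} λ_{parent^n(u)} and Ω(u,n) = γ(u,n)^{−q} Σ_{v∈child^n(u)} λ_v, then B is hypercyclic. -/

import Mathlib

open Filter

attribute [local instance] Classical.propDecidable
open scoped ENNReal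

/-- A directed tree: a locally finite directed graph on a (countably infinite)
vertex set with no directed circuits, whose underlying undirected graph is
connected, and in which every vertex has indegree at most one. -/
structure DirTree (V : Type) where
  E : V → V → Prop
  finIn : ∀ v : V, {u : V | E u v}.Finite
  finOut : ∀ v : V, {u : V | E v u}.Finite
  noCircuit : ∀ (n : ℕ) (c : Fin (n + 1) → V), Function.Injective c →
    (∀ i : Fin n, E (c i.castSucc) (c i.succ)) → ¬ E (c (Fin.last n)) (c 0)
  conn : (SimpleGraph.fromRel E).Connected
  indeg : ∀ ⦃u w v : V⦄, E u v → E w v → u = w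

namespace DirTree

variable {V : Type} (T : DirTree V)

/-- A root is a vertex of indegree zero. -/
def IsRoot (r : V) : Prop := ∀ u : V, ¬ T.E u r

/-- The set of children of a vertex. -/
def child (u : V) : Set V := {v : V | T.E u v}

/-- A leaf is a vertex of outdegree zero. -/
def IsLeaf (u : V) : Prop := ¬ (T.child u).Nonempty

/-- The (forward) shift `(S f)(v) = f (parent v)`, with `(S f)(root) = 0`. -/
noncomputable def shift (f : V → ℂ) (v : V) : ℂ :=
  if h : ∃ u : V, T.E u v then f h.choose else 0

/-- The backward shift `(B f)(u) = ∑_{v ∈ child u} f v`. -/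
noncomputable def bwd (f : V → ℂ) (u : V) : ℂ :=
  ∑' v : T.child u, f v.1

/-- The operator `(S* g)(u) = ∑_{v ∈ child u} g v · λ_v / λ_u`. -/
noncomputable def sstar (lam : V → ℝ) (g : V → ℂ) (u : V) : ℂ :=
  ∑' v : T.child u, g v.1 * ((lam v.1 / lam u : ℝ) : ℂ)

/-- `childN n u` is the set of vertices `v` with `parentⁿ v = u`. -/
def childN (T : DirTree V) : ℕ → V → Set V
  | 0, u => {u}
  | n + 1, u => {w : V | ∃ v ∈ T.child u, w ∈ childN T n v}

/-- `γ(u,n)`, the cardinality of `childN n u`. -/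
noncomputable def gam (u : V) (n : ℕ) : ℕ := (T.childN n u).ncard

/-- The `n`-th ancestor `parentⁿ u` of `u` (junk value `u` if it does not exist). -/
noncomputable def anc (u : V) (n : ℕ) : V :=
  if h : ∃ w : V, u ∈ T.childN n w then h.choose else u

/-- A leafless directed tree has a free end if some vertex is such that all of
its descendants have outdegree one. -/
def FreeEnd : Prop :=
  ∃ w : V, ∀ n : ℕ, 0 < n → ∀ v ∈ T.childN n w, (T.child v).ncard = 1

end DirTree

/-- Membership in the weighted space `L^p(T,λ)`. -/
def MemLp' {V : Type} (lam : V → ℝ) (p : ℝ) (f : V → ℂ) : Prop :=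
  Summable (fun v => ‖f v‖ ^ p * lam v)

/-- The norm of the weighted space `L^p(T,λ)`. -/
noncomputable def pNorm {V : Type} (lam : V → ℝ) (p : ℝ) (f : V → ℂ) : ℝ :=
  (∑' v, ‖f v‖ ^ p * lam v) ^ (1 / p)

/-- Boundedness of an operator on `L^p(T,λ)`. -/
def BoundedOn {V : Type} (lam : V → ℝ) (p : ℝ) (A : (V → ℂ) → (V → ℂ)) : Prop :=
  ∃ C : ℝ, 0 ≤ C ∧ ∀ f : V → ℂ, MemLp' lam p f →
    MemLp' lam p (A f) ∧ pNorm lam p (A f) ≤ C * pNorm lam p f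

/-- Hypercyclicity of an operator on `L^p(T,λ)`: some `f ∈ L^p(T,λ)` has dense
orbit `{Aⁿ f : n ∈ ℕ}`. -/
def Hypercyclic {V : Type} (lam : V → ℝ) (p : ℝ) (A : (V → ℂ) → (V → ℂ)) : Prop :=
  ∃ f : V → ℂ, MemLp' lam p f ∧ ∀ g : V → ℂ, MemLp' lam p g → ∀ ε : ℝ, 0 < ε →
    ∃ n : ℕ, MemLp' lam p (A^[n] f - g) ∧ pNorm lam p (A^[n] f - g) < ε

/-!
The vectors `Pi.single u 1` span a dense subspace, so by Baire category it is enough that along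
`nk` the powers of `B` send each of them to `0`, and that each of them is the image under
`B ^ nk k` of a vector `z k` with `z k → 0`. Now `B ^ n` maps `Pi.single u 1` to the unit vector
at the `n`-th ancestor of `u`, of norm `λ ^ (1 / q)` at that ancestor, and it maps the function
equal to `1 / γ(u, n)` on the `n`-th generation of descendants of `u`, whose norm is
`Ω(u, n) ^ (1 / q)`, to `Pi.single u 1`.
-/

open Topology

section Universality

theorem exists_denseRange_apply_of_transitive {ι X Y : Type*} [TopologicalSpace X] [BaireSpace X]
    [Nonempty X] [TopologicalSpace Y] [SecondCountableTopology Y] {f : ι → X → Y}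
    (hf : ∀ i, Continuous (f i))
    (htrans : ∀ U V, IsOpen U → U.Nonempty → IsOpen V → V.Nonempty →
      ∃ i, ∃ x ∈ U, f i x ∈ V) :
    ∃ x, DenseRange fun i => f i x := by
  have hbasis := TopologicalSpace.isBasis_countableBasis Y
  have hcountable := TopologicalSpace.countable_countableBasis Y
  have hdense : Dense (⋂ W ∈ TopologicalSpace.countableBasis Y, ⋃ i, {x | f i x ∈ W}) := by
    refine dense_biInter_of_isOpen
      (fun W hW => isOpen_iUnion fun i => (hbasis.isOpen hW).preimage (hf i)) hcountable
      fun W hW => dense_iff_inter_open.2 fun U hU hUne => ?_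
    obtain ⟨i, x, hxU, hxW⟩ := htrans U W hU hUne (hbasis.isOpen hW)
      (TopologicalSpace.nonempty_of_mem_countableBasis hW)
    exact ⟨x, hxU, Set.mem_iUnion.2 ⟨i, hxW⟩⟩
  obtain ⟨x, hx⟩ := hdense.nonempty
  refine ⟨x, hbasis.dense_iff.2 fun W hW _ => ?_⟩
  obtain ⟨i, hi⟩ := Set.mem_iUnion.1 (Set.mem_iInter₂.1 hx W hW)
  exact ⟨f i x, hi, i, rfl⟩

variable {ι 𝕜 X Y : Type*} [Semiring 𝕜] [AddCommMonoid X] [Module 𝕜 X] [AddCommMonoid Y]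
  [Module 𝕜 Y] [TopologicalSpace Y] [ContinuousAdd Y] [ContinuousConstSMul 𝕜 Y] {l : Filter ι}

theorem tendsto_zero_of_mem_span {A : ι → X →ₗ[𝕜] Y} {D : Set X}
    (hD : ∀ x ∈ D, Tendsto (fun i => A i x) l (𝓝 0)) {x : X} (hx : x ∈ Submodule.span 𝕜 D) :
    Tendsto (fun i => A i x) l (𝓝 0) := by
  induction hx using Submodule.span_induction with
  | mem x hx => exact hD x hx
  | zero => simp [tendsto_const_nhds]
  | add x y _ _ hx hy => simpa using hx.add hy
  | smul a x _ hx => simpa using hx.const_smul a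

variable [TopologicalSpace X] [ContinuousAdd X] [ContinuousConstSMul 𝕜 X]

theorem exists_tendsto_preimage_of_mem_span {A : ι → X →ₗ[𝕜] Y} {D : Set Y}
    (hD : ∀ y ∈ D, ∃ z : ι → X, Tendsto z l (𝓝 0) ∧ Tendsto (fun i => A i (z i)) l (𝓝 y))
    {y : Y} (hy : y ∈ Submodule.span 𝕜 D) :
    ∃ z : ι → X, Tendsto z l (𝓝 0) ∧ Tendsto (fun i => A i (z i)) l (𝓝 y) := by
  induction hy using Submodule.span_induction with
  | mem y hy => exact hD y hy
  | zero => exact ⟨fun _ => 0, tendsto_const_nhds, by simp [tendsto_const_nhds]⟩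
  | add y y' _ _ hy hy' =>
    obtain ⟨z, hz, hAz⟩ := hy
    obtain ⟨z', hz', hAz'⟩ := hy'
    exact ⟨fun i => z i + z' i, by simpa using hz.add hz', by simpa using hAz.add hAz'⟩
  | smul a y _ hy =>
    obtain ⟨z, hz, hAz⟩ := hy
    exact ⟨fun i => a • z i, by simpa using hz.const_smul a, by simpa using hAz.const_smul a⟩

theorem exists_denseRange_apply_of_dense_span [BaireSpace X] [SecondCountableTopology Y] [l.NeBot]
    {A : ι → X →L[𝕜] Y} {D : Set X} (hD : Dense (Submodule.span 𝕜 D : Set X))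
    {D' : Set Y} (hD' : Dense (Submodule.span 𝕜 D' : Set Y))
    (hzero : ∀ x ∈ D, Tendsto (fun i => A i x) l (𝓝 0))
    (hinv : ∀ y ∈ D', ∃ z : ι → X, Tendsto z l (𝓝 0) ∧ Tendsto (fun i => A i (z i)) l (𝓝 y)) :
    ∃ x, DenseRange fun i => A i x := by
  refine exists_denseRange_apply_of_transitive (fun i => (A i).continuous)
    fun U V hU hUne hV hVne => ?_
  obtain ⟨x, hxU, hx⟩ := hD.inter_open_nonempty U hU hUne
  obtain ⟨y, hyV, hy⟩ := hD'.inter_open_nonempty V hV hVne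
  have hAx : Tendsto (fun i => A i x) l (𝓝 0) :=
    tendsto_zero_of_mem_span (A := fun i => (A i : X →ₗ[𝕜] Y)) hzero hx
  obtain ⟨z, hz, hAz⟩ :=
    exists_tendsto_preimage_of_mem_span (A := fun i => (A i : X →ₗ[𝕜] Y)) hinv hy
  have hnear : Tendsto (fun i => x + z i) l (𝓝 x) := by simpa using hz.const_add x
  have himage : Tendsto (fun i => A i (x + z i)) l (𝓝 y) := by simpa using hAx.add hAz
  obtain ⟨i, hiU, hiV⟩ :=
    ((hnear.eventually_mem (hU.mem_nhds hxU)).and (himage.eventually_mem (hV.mem_nhds hyV))).exists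
  exact ⟨i, x + z i, hiU, hiV⟩

end Universality

theorem separableSpace_of_dense_span (𝕜 : Type*) {X : Type*} [Semiring 𝕜] [TopologicalSpace 𝕜]
    [TopologicalSpace.SeparableSpace 𝕜] [AddCommMonoid X] [Module 𝕜 X] [TopologicalSpace X]
    [ContinuousAdd X] [ContinuousSMul 𝕜 X] {D : Set X} (hDcount : D.Countable)
    (hD : Dense (Submodule.span 𝕜 D : Set X)) : TopologicalSpace.SeparableSpace X :=
  TopologicalSpace.isSeparable_univ_iff.1 <|
    hD.closure_eq ▸ (hDcount.isSeparable.span (R := 𝕜)).closure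

theorem dense_span_range_lp_single {ι 𝕜 : Type*} [DecidableEq ι] [NormedField 𝕜] {p : ℝ≥0∞}
    [Fact (1 ≤ p)] (hp : p ≠ ∞) {a : ι → 𝕜} (ha : ∀ i, a i ≠ 0) :
    Dense (Submodule.span 𝕜 (Set.range fun i => lp.single (E := fun _ => 𝕜) p i (a i)) :
      Set (lp (fun _ : ι => 𝕜) p)) := by
  intro x
  refine mem_closure_of_tendsto (lp.hasSum_single hp x)
    (Eventually.of_forall fun s => Submodule.sum_mem _ fun i _ => ?_)
  have hsingle : lp.single p i (x i) = (x i / a i) • lp.single (E := fun _ => 𝕜) p i (a i) := by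
    rw [← lp.single_smul, smul_eq_mul, div_mul_cancel₀ _ (ha i)]
  rw [hsingle]
  exact Submodule.smul_mem _ _ (Submodule.subset_span ⟨i, rfl⟩)

theorem separableSpace_lp {ι 𝕜 : Type*} [Countable ι] [NormedField 𝕜]
    [TopologicalSpace.SeparableSpace 𝕜] {p : ℝ≥0∞} [Fact (1 ≤ p)] (hp : p ≠ ∞) :
    TopologicalSpace.SeparableSpace (lp (fun _ : ι => 𝕜) p) :=
  separableSpace_of_dense_span 𝕜 (Set.countable_range _)
    (dense_span_range_lp_single hp fun _ => one_ne_zero)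

theorem tendsto_rpow_one_div_zero {ι : Type*} {l : Filter ι} {g : ι → ℝ} {q : ℝ} (hq : 0 < q)
    (hg : Tendsto g l (𝓝 0)) : Tendsto (fun i => g i ^ (1 / q)) l (𝓝 0) := by
  simpa [hq.ne'] using hg.rpow_const (p := 1 / q) (Or.inr (by positivity))

section WeightedSpace

variable {V : Type} {lam : V → ℝ} {q : ℝ}

theorem norm_indicator_const_rpow_mul (hq : q ≠ 0) (s : Set V) (c : ℂ) (v : V) :
    ‖s.indicator (fun _ => c) v‖ ^ q * lam v = s.indicator (fun v => ‖c‖ ^ q * lam v) v := by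
  by_cases hv : v ∈ s <;> simp [hv, hq]

theorem memLp'_indicator_const (hq : q ≠ 0) {s : Set V} (hs : s.Finite) (c : ℂ) :
    MemLp' lam q (s.indicator fun _ => c) := by
  simp only [MemLp', norm_indicator_const_rpow_mul hq]
  exact summable_of_hasFiniteSupport (hs.subset Set.support_indicator_subset)

theorem pNorm_indicator_const (hq : q ≠ 0) (s : Set V) (c : ℂ) :
    pNorm lam q (s.indicator fun _ => c) = (‖c‖ ^ q * ∑' v : s, lam v) ^ (1 / q) := by
  simp only [pNorm, norm_indicator_const_rpow_mul hq]
  rw [← tsum_subtype s fun v => ‖c‖ ^ q * lam v, tsum_mul_left]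

theorem single_eq_indicator_const (u : V) (c : ℂ) :
    Pi.single u c = ({u} : Set V).indicator fun _ => c := by
  ext v
  simp [Pi.single_apply, Set.indicator_apply]

theorem pNorm_single_one (hq : q ≠ 0) (u : V) :
    pNorm lam q (Pi.single u 1) = lam u ^ (1 / q) := by
  rw [single_eq_indicator_const, pNorm_indicator_const hq]
  simp

theorem ofReal_rpow_ne_zero {a : ℝ} (ha : 0 < a) (r : ℝ) : ((a ^ r : ℝ) : ℂ) ≠ 0 :=
  Complex.ofReal_ne_zero.2 (Real.rpow_pos_of_pos ha r).ne'

theorem norm_div_rpow_inv_rpow_mul {a : ℝ} (ha : 0 < a) (hq : q ≠ 0) (c : ℂ) :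
    ‖c / ((a ^ q⁻¹ : ℝ) : ℂ)‖ ^ q * a = ‖c‖ ^ q := by
  have hroot : 0 ≤ a ^ q⁻¹ := Real.rpow_nonneg ha.le _
  rw [norm_div, Complex.norm_of_nonneg hroot, Real.div_rpow (norm_nonneg c) hroot,
    Real.rpow_inv_rpow ha.le hq, div_mul_cancel₀ _ ha.ne']

/-- The isometry `x ↦ λ ^ (-1 / q) x` of the unweighted sequence space `ℓ^q` onto `L^q(T, λ)`.
Its codomain is the space of all functions, because `L^q(T, λ)` is given only as the predicate
`MemLp'`. -/
noncomputable def unweight (lam : V → ℝ) (q : ℝ) :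
    lp (fun _ : V => ℂ) (ENNReal.ofReal q) →ₗ[ℂ] (V → ℂ) where
  toFun x v := x v / ((lam v ^ q⁻¹ : ℝ) : ℂ)
  map_add' x y := by ext v; simp [add_div]
  map_smul' a x := by ext v; simp [mul_div_assoc]

theorem unweight_apply (x : lp (fun _ : V => ℂ) (ENNReal.ofReal q)) (v : V) :
    unweight lam q x v = x v / ((lam v ^ q⁻¹ : ℝ) : ℂ) :=
  rfl

theorem unweight_injective (hlam : ∀ v, 0 < lam v) : Function.Injective (unweight lam q) := by
  intro x y hxy
  ext v
  exact (div_left_inj' (ofReal_rpow_ne_zero (hlam v) q⁻¹)).1 (congrFun hxy v)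

theorem memLp'_iff_mem_range_unweight (hlam : ∀ v, 0 < lam v) (hq : 0 < q) {f : V → ℂ} :
    MemLp' lam q f ↔ f ∈ (unweight lam q).range := by
  have hp : (ENNReal.ofReal q).toReal = q := ENNReal.toReal_ofReal hq.le
  constructor
  · intro hf
    have hcancel (v : V) : f v * ((lam v ^ q⁻¹ : ℝ) : ℂ) / ((lam v ^ q⁻¹ : ℝ) : ℂ) = f v :=
      mul_div_cancel_right₀ _ (ofReal_rpow_ne_zero (hlam v) _)
    have hmem : Memℓp (fun v => f v * ((lam v ^ q⁻¹ : ℝ) : ℂ)) (ENNReal.ofReal q) := by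
      rw [memℓp_gen_iff (hp.symm ▸ hq), hp]
      refine hf.congr fun v => ?_
      rw [← norm_div_rpow_inv_rpow_mul (hlam v) hq.ne' (_ * _), hcancel]
    exact ⟨⟨_, hmem⟩, funext hcancel⟩
  · rintro ⟨x, rfl⟩
    have hsum := (lp.memℓp x).summable (hp.symm ▸ hq)
    simpa only [MemLp', unweight_apply, norm_div_rpow_inv_rpow_mul (hlam _) hq.ne', hp]
      using hsum

theorem pNorm_unweight (hlam : ∀ v, 0 < lam v) (hq : 0 < q)
    (x : lp (fun _ : V => ℂ) (ENNReal.ofReal q)) : pNorm lam q (unweight lam q x) = ‖x‖ := by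
  have hp : (ENNReal.ofReal q).toReal = q := ENNReal.toReal_ofReal hq.le
  rw [lp.norm_eq_tsum_rpow (hp.symm ▸ hq), hp]
  simp only [pNorm, unweight_apply, norm_div_rpow_inv_rpow_mul (hlam _) hq.ne']

theorem unweight_single (hlam : ∀ v, 0 < lam v) (u : V) :
    unweight lam q (lp.single (E := fun _ => ℂ) _ u ((lam u ^ q⁻¹ : ℝ) : ℂ)) = Pi.single u 1 := by
  ext v
  rw [unweight_apply]
  rcases eq_or_ne v u with rfl | hvu
  · rw [lp.single_apply_self, Pi.single_eq_same, div_self (ofReal_rpow_ne_zero (hlam v) _)]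
  · rw [lp.single_apply_ne _ _ _ hvu, zero_div, Pi.single_eq_of_ne hvu]

theorem BoundedOn.exists_semiconj_unweight [Fact (1 ≤ ENNReal.ofReal q)]
    {A : (V → ℂ) →ₗ[ℂ] (V → ℂ)} (hA : BoundedOn lam q A) (hlam : ∀ v, 0 < lam v) :
    ∃ A' : lp (fun _ : V => ℂ) (ENNReal.ofReal q) →L[ℂ] lp (fun _ : V => ℂ) (ENNReal.ofReal q),
      Function.Semiconj (unweight lam q) A' A := by
  have hq : 0 < q := ENNReal.ofReal_pos.1 (one_pos.trans_le Fact.out)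
  obtain ⟨C, -, hC⟩ := hA
  have hmem (x) : MemLp' lam q (unweight lam q x) :=
    (memLp'_iff_mem_range_unweight hlam hq).2 ⟨x, rfl⟩
  let A₀ := (A ∘ₗ unweight lam q).codRestrictOfInjective (unweight lam q)
    (unweight_injective hlam) fun x => (memLp'_iff_mem_range_unweight hlam hq).1 (hC _ (hmem x)).1
  have hA₀ : Function.Semiconj (unweight lam q) A₀ A := fun x => by simp [A₀]
  refine ⟨A₀.mkContinuous C fun x => ?_, hA₀⟩
  simpa only [← pNorm_unweight hlam hq, hA₀.eq] using (hC _ (hmem x)).2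

theorem hypercyclic_of_tendsto_pNorm_iterate_single [Countable V] {ι : Type*} {l : Filter ι}
    [l.NeBot] (hlam : ∀ v, 0 < lam v) (hq : 1 ≤ q) {A : (V → ℂ) →ₗ[ℂ] (V → ℂ)}
    (hA : BoundedOn lam q A) {n : ι → ℕ}
    (hzero : ∀ u, Tendsto (fun i => pNorm lam q (A^[n i] (Pi.single u 1))) l (𝓝 0))
    (hinv : ∀ u, ∃ z : ι → V → ℂ, (∀ i, MemLp' lam q (z i)) ∧
      Tendsto (fun i => pNorm lam q (z i)) l (𝓝 0) ∧ ∀ i, A^[n i] (z i) = Pi.single u 1) :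
    Hypercyclic lam q A := by
  have hq0 : 0 < q := by linarith
  have : Fact (1 ≤ ENNReal.ofReal q) := ⟨by simpa using hq⟩
  have hmem := fun f => memLp'_iff_mem_range_unweight (f := f) hlam hq0
  have hnorm := pNorm_unweight hlam hq0
  obtain ⟨A', hA'⟩ := hA.exists_semiconj_unweight hlam
  have hpow (m : ℕ) (x) : unweight lam q ((A' ^ m) x) = A^[m] (unweight lam q x) := by
    rw [FunLike.coe_pow_eq_iterate, (hA'.iterate_right m).eq]
  let e (u : V) : lp (fun _ : V => ℂ) (ENNReal.ofReal q) :=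
    lp.single _ u ((lam u ^ q⁻¹ : ℝ) : ℂ)
  have he (u : V) : unweight lam q (e u) = Pi.single u 1 := unweight_single hlam u
  have hdense : Dense (Submodule.span ℂ (Set.range e) :
      Set (lp (fun _ : V => ℂ) (ENNReal.ofReal q))) :=
    dense_span_range_lp_single ENNReal.ofReal_ne_top fun u => ofReal_rpow_ne_zero (hlam u) _
  have := separableSpace_lp (ι := V) (𝕜 := ℂ) (ENNReal.ofReal_ne_top (r := q))
  have := UniformSpace.secondCountable_of_separable (lp (fun _ : V => ℂ) (ENNReal.ofReal q))
  have hlim (x : ι → lp (fun _ : V => ℂ) (ENNReal.ofReal q)) :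
      Tendsto x l (𝓝 0) ↔ Tendsto (fun i => pNorm lam q (unweight lam q (x i))) l (𝓝 0) := by
    simp only [hnorm, ← tendsto_zero_iff_norm_tendsto_zero]
  obtain ⟨x, hx⟩ : ∃ x, DenseRange fun i => (A' ^ n i) x := by
    refine exists_denseRange_apply_of_dense_span (l := l) hdense hdense ?_ ?_
    · rintro _ ⟨u, rfl⟩
      simpa only [hlim, hpow, he] using hzero u
    · rintro _ ⟨u, rfl⟩
      obtain ⟨z, hz, hz0, hAz⟩ := hinv u
      choose y hy using fun i => (hmem _).1 (hz i)
      have hAy (i) : (A' ^ n i) (y i) = e u :=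
        unweight_injective hlam (by rw [hpow, hy, hAz, he])
      refine ⟨y, ?_, by simp only [hAy, tendsto_const_nhds]⟩
      simpa only [hlim, hy] using hz0
  refine ⟨unweight lam q x, (hmem _).2 ⟨x, rfl⟩, fun g hg ε hε => ?_⟩
  obtain ⟨y, rfl⟩ := (hmem _).1 hg
  obtain ⟨i, hi⟩ := hx.exists_dist_lt y hε
  refine ⟨n i, ?_⟩
  rw [← hpow, ← map_sub, hnorm, ← dist_eq_norm, dist_comm]
  exact ⟨(hmem _).2 ⟨_, rfl⟩, hi⟩

end WeightedSpace

namespace DirTree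

variable {V : Type} {T : DirTree V}

theorem childN_finite (n : ℕ) (u : V) : (T.childN n u).Finite := by
  induction n generalizing u with
  | zero => exact Set.finite_singleton u
  | succ n ih =>
    have hunion : T.childN (n + 1) u = ⋃ v ∈ T.child u, T.childN n v := by
      ext w; simp [childN]
    exact hunion ▸ (T.finOut u).biUnion fun v _ => ih v

theorem childN_nonempty (hleafless : ∀ u, ¬ T.IsLeaf u) (n : ℕ) (u : V) :
    (T.childN n u).Nonempty := by
  induction n generalizing u with
  | zero => exact Set.singleton_nonempty u
  | succ n ih =>
    obtain ⟨v, hv⟩ := not_not.1 (hleafless u)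
    obtain ⟨w, hw⟩ := ih v
    exact ⟨w, v, hv, hw⟩

theorem gam_pos (hleafless : ∀ u, ¬ T.IsLeaf u) (u : V) (n : ℕ) : 0 < T.gam u n :=
  (Set.ncard_pos (childN_finite n u)).2 (childN_nonempty hleafless n u)

theorem tendsto_zero_of_gam_rpow_mul (hleafless : ∀ u, ¬ T.IsLeaf u) {ι : Type*} {l : Filter ι}
    {u : ι → V} {n : ι → ℕ} {a : ι → ℝ} {r : ℝ} (ha : ∀ i, 0 ≤ a i) (hr : 0 ≤ r)
    (h : Tendsto (fun i => (T.gam (u i) (n i) : ℝ) ^ r * a i) l (𝓝 0)) : Tendsto a l (𝓝 0) :=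
  squeeze_zero ha (fun i => le_mul_of_one_le_left (ha i) <|
    Real.one_le_rpow (Nat.one_le_cast.2 (gam_pos hleafless (u i) (n i))) hr) h

theorem exists_mem_childN (hnoroot : ∀ r, ¬ T.IsRoot r) (n : ℕ) (u : V) :
    ∃ w, u ∈ T.childN n w := by
  induction n with
  | zero => exact ⟨u, rfl⟩
  | succ n ih =>
    obtain ⟨w, hw⟩ := ih
    obtain ⟨t, ht⟩ : ∃ t, T.E t w := by simpa [IsRoot] using hnoroot w
    exact ⟨t, w, ht, hw⟩

theorem mem_childN_anc (hnoroot : ∀ r, ¬ T.IsRoot r) (n : ℕ) (u : V) :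
    u ∈ T.childN n (T.anc u n) := by
  have h := exists_mem_childN hnoroot n u
  rw [anc, dif_pos h]
  exact h.choose_spec

theorem bwd_eq_sum (f : V → ℂ) (u : V) : T.bwd f u = ∑ v ∈ (T.finOut u).toFinset, f v := by
  rw [← Finset.tsum_subtype', Set.Finite.coe_toFinset]
  rfl

variable (T) in
/-- The backward shift on the space of all functions `V → ℂ`, as a linear map. -/
noncomputable def bwdLinearMap : (V → ℂ) →ₗ[ℂ] (V → ℂ) where
  toFun := T.bwd
  map_add' f g := by ext u; simp [bwd_eq_sum, Finset.sum_add_distrib]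
  map_smul' a f := by ext u; simp [bwd_eq_sum, Finset.mul_sum]

theorem coe_bwdLinearMap : ⇑T.bwdLinearMap = T.bwd :=
  rfl

theorem bwd_single {u v : V} (huv : T.E u v) (c : ℂ) : T.bwd (Pi.single v c) = Pi.single u c := by
  ext w
  have hedge : T.E w v ↔ w = u := ⟨fun hwv => T.indeg hwv huv, fun hwu => hwu ▸ huv⟩
  simp [bwd_eq_sum, Pi.single_apply, hedge]

theorem bwd_iterate_single {n : ℕ} {u v : V} (hv : v ∈ T.childN n u) (c : ℂ) :
    T.bwd^[n] (Pi.single v c) = Pi.single u c := by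
  induction n generalizing u with
  | zero => rw [show v = u from hv, Function.iterate_zero_apply]
  | succ n ih =>
    obtain ⟨w, hw, hvw⟩ := hv
    rw [Function.iterate_succ_apply', ih hvw, bwd_single hw]

theorem bwd_iterate_indicator_const (n : ℕ) (u : V) (c : ℂ) :
    T.bwd^[n] ((T.childN n u).indicator fun _ => c) = Pi.single u (T.gam u n * c) := by
  have hfin := childN_finite (T := T) n u
  have hsum : (T.childN n u).indicator (fun _ => c) = ∑ v ∈ hfin.toFinset, Pi.single v c := by
    ext w
    simp [Set.indicator_apply, Pi.single_apply]
  have hpow (f : V → ℂ) : T.bwd^[n] f = (T.bwdLinearMap ^ n) f := by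
    rw [Module.End.pow_apply, coe_bwdLinearMap]
  calc T.bwd^[n] ((T.childN n u).indicator fun _ => c)
      = ∑ v ∈ hfin.toFinset, T.bwd^[n] (Pi.single v c) := by simp only [hsum, hpow, map_sum]
    _ = ∑ _v ∈ hfin.toFinset, Pi.single u c :=
      Finset.sum_congr rfl fun v hv => bwd_iterate_single (hfin.mem_toFinset.1 hv) c
    _ = Pi.single u (T.gam u n * c) := by
      rw [Finset.sum_const, ← Set.ncard_eq_toFinset_card _ hfin, ← Pi.single_smul, nsmul_eq_mul,
        gam]

end DirTree

theorem stmt_14_general {V : Type} [Countable V] (T : DirTree V)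
    (hleafless : ∀ u : V, ¬ T.IsLeaf u) (hnoroot : ∀ r : V, ¬ T.IsRoot r)
    (lam : V → ℝ) (hlam : ∀ v : V, 0 < lam v) (q : ℝ) (hq : 1 ≤ q)
    (hb : BoundedOn lam q T.bwd) (nk : ℕ → ℕ)
    (hanc : ∀ u : V, Tendsto (fun k : ℕ => lam (T.anc u (nk k))) atTop (𝓝 0))
    (hOmega : ∀ u : V,
      Tendsto (fun k : ℕ =>
          (∑' v : T.childN (nk k) u, lam v.1) / ((T.gam u (nk k) : ℝ)) ^ q)
        atTop (𝓝 0)) :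
    Hypercyclic lam q T.bwd := by
  have hq0 : 0 < q := by linarith
  refine hypercyclic_of_tendsto_pNorm_iterate_single (A := T.bwdLinearMap) (l := atTop) (n := nk)
    hlam hq hb (fun u => ?_) fun u => ?_
  · refine (tendsto_rpow_one_div_zero hq0 (hanc u)).congr fun k => ?_
    rw [DirTree.coe_bwdLinearMap,
      DirTree.bwd_iterate_single (DirTree.mem_childN_anc hnoroot (nk k) u),
      pNorm_single_one hq0.ne']
  · refine ⟨fun k => (T.childN (nk k) u).indicator fun _ => (T.gam u (nk k) : ℂ)⁻¹,
      fun k => memLp'_indicator_const hq0.ne' (DirTree.childN_finite _ u) _, ?_, fun k => ?_⟩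
    · refine (tendsto_rpow_one_div_zero hq0 (hOmega u)).congr fun k => ?_
      rw [pNorm_indicator_const hq0.ne', norm_inv, Complex.norm_natCast,
        Real.inv_rpow (Nat.cast_nonneg _), div_eq_inv_mul]
    · have hgam : (T.gam u (nk k) : ℂ) ≠ 0 :=
        Nat.cast_ne_zero.2 (DirTree.gam_pos hleafless u (nk k)).ne'
      rw [DirTree.coe_bwdLinearMap, DirTree.bwd_iterate_indicator_const, mul_inv_cancel₀ hgam]

/-- For a leafless unrooted directed tree with bounded backward
shift `B` on `L^q(T,λ)`: if there is a strictly increasing sequence `n_k` with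
`Θ(u,n_k) = γ(parentⁿᵏ u, n_k)^{q-1} λ_{parentⁿᵏ u} → 0` and
`Ω(u,n_k) = γ(u,n_k)^{-q} ∑_{v ∈ childⁿᵏ(u)} λ_v → 0` for every `u`, then `B`
is hypercyclic. -/
theorem stmt_14 {V : Type} [Countable V] [Infinite V] (T : DirTree V)
    (hleafless : ∀ u : V, ¬ T.IsLeaf u) (hnoroot : ∀ r : V, ¬ T.IsRoot r)
    (lam : V → ℝ) (hlam : ∀ v : V, 0 < lam v) (q : ℝ) (hq : 1 ≤ q)
    (hb : BoundedOn lam q T.bwd)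
    (nk : ℕ → ℕ) (hnk : StrictMono nk)
    (hTheta : ∀ u : V,
      Tendsto (fun k : ℕ =>
          ((T.gam (T.anc u (nk k)) (nk k) : ℝ)) ^ (q - 1) * lam (T.anc u (nk k)))
        atTop (nhds 0))
    (hOmega : ∀ u : V,
      Tendsto (fun k : ℕ =>
          (∑' v : T.childN (nk k) u, lam v.1) / ((T.gam u (nk k) : ℝ)) ^ q)
        atTop (nhds 0)) :
    Hypercyclic lam q T.bwd :=
  stmt_14_general T hleafless hnoroot lam hlam q hq hb nk (fun u =>
    DirTree.tendsto_zero_of_gam_rpow_mul hleafless (fun _ => (hlam _).le) (by linarith) (hTheta u))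
    hOmega
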